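/- The intersection of the Markov spectrum M with the open interval (4√210/19, (74613+4096√210)/43449) consists of exactly one point, namely √85/3, which is therefore an isolated point of M. Moreover, both endpoints 4√210/19 and (74613+4096√210)/43449 belong to M. -/

import Mathlib

open Filter Set MeasureTheory
open scoped ENNReal

/-- Finite continued fraction `[a 0; a 1, ..., a n]`. -/
noncomputable def cfConv : (ℕ → ℝ) → ℕ → ℝ
  | a, 0 => a 0
  | a, n + 1 => a 0 + 1 / cfConv (fun i => a (i + 1)) n

/-- Value of the infinite continued fraction `[a 0; a 1, a 2, ...]`,
as the limit of its convergents. -/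
noncomputable def cfVal (a : ℕ → ℝ) : ℝ := limUnder atTop (cfConv a)

/-- `λ_k(α) = [α_k; α_{k+1}, ...] + [0; α_{k-1}, α_{k-2}, ...]`. -/
noncomputable def lambdaVal (α : ℤ → ℕ) (k : ℤ) : ℝ :=
  cfVal (fun n => (α (k + n) : ℝ)) +
  cfVal (fun n => if n = 0 then 0 else (α (k - n) : ℝ))

/-- The Markov value `m(α) = sup_{k ∈ ℤ} λ_k(α)`. -/
noncomputable def markovValue (α : ℤ → ℕ) : ℝ := ⨆ k : ℤ, lambdaVal α k

/-- The Markov spectrum. -/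
def markovSpectrum : Set ℝ :=
  { x | ∃ α : ℤ → ℕ, (∀ n, 0 < α n) ∧ BddAbove (range (lambdaVal α)) ∧
      markovValue α = x }

/-- The dimension function `d(t) = dim_H (M ∩ (-∞, t))`. -/
noncomputable def dimFun (t : ℝ) : ℝ≥0∞ := dimH (markovSpectrum ∩ Iio t)

section ContinuedFractions

variable {a : ℕ → ℝ}

lemma one_le_cfConv (h : ∀ i, 1 ≤ a i) (n : ℕ) : 1 ≤ cfConv a n := by
  induction n generalizing a with
  | zero => exact h 0
  | succ n ih =>
    have h1 := ih (a := fun i => a (i + 1)) fun i => h (i + 1)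
    have h2 : 0 ≤ 1 / cfConv (fun i => a (i + 1)) n := by positivity
    have h3 := h 0
    simp only [cfConv]
    linarith

lemma abs_cfConv_sub_le (h : ∀ i, 1 ≤ a i) (n m : ℕ) :
    |cfConv a (m + 2 * n) - cfConv a (2 * n)| ≤ (1 / 4) ^ n := by
  induction n generalizing a with
  | zero =>
    cases m with
    | zero => simp
    | succ m =>
      have h1 := one_le_cfConv (a := fun i => a (i + 1)) (fun i => h (i + 1)) m
      have h2 : 0 < 1 / cfConv (fun i => a (i + 1)) m := by positivity
      simp only [cfConv, pow_zero, add_sub_cancel_left]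
      rw [abs_of_pos h2, div_le_one (by linarith)]
      exact h1
  | succ n ih =>
    have h2 : ∀ i, 1 ≤ a (i + 1 + 1) := fun i => h (i + 1 + 1)
    have hx := one_le_cfConv h2 (m + 2 * n)
    have hy := one_le_cfConv h2 (2 * n)
    have hxy := ih h2
    have hb : 1 ≤ a 1 := h 1
    rw [show m + 2 * (n + 1) = m + 2 * n + 1 + 1 by ring, show 2 * (n + 1) = 2 * n + 1 + 1 by ring]
    simp only [cfConv, zero_add]
    set x := cfConv (fun i => a (i + 1 + 1)) (m + 2 * n)
    set y := cfConv (fun i => a (i + 1 + 1)) (2 * n)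
    have hX : 2 ≤ a 1 * x + 1 := by nlinarith
    have hY : 2 ≤ a 1 * y + 1 := by nlinarith
    have key : a 0 + 1 / (a 1 + 1 / x) - (a 0 + 1 / (a 1 + 1 / y)) =
        (x - y) / ((a 1 * x + 1) * (a 1 * y + 1)) := by
      field_simp
      ring
    rw [key, abs_div, abs_of_pos (by positivity : 0 < (a 1 * x + 1) * (a 1 * y + 1)),
      div_le_iff₀ (by positivity), pow_succ]
    have h4 : 4 ≤ (a 1 * x + 1) * (a 1 * y + 1) := by nlinarith
    have h5 : (0 : ℝ) ≤ (1 / 4) ^ n := by positivity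
    nlinarith

lemma tendsto_cfConv (h : ∀ i, 1 ≤ a i) : Tendsto (cfConv a) atTop (nhds (cfVal a)) := by
  refine CauchySeq.tendsto_limUnder (Metric.cauchySeq_iff'.2 fun ε hε => ?_)
  obtain ⟨n, hn⟩ := exists_pow_lt_of_lt_one hε (by norm_num : (1 / 4 : ℝ) < 1)
  refine ⟨2 * n, fun m hm => ?_⟩
  obtain ⟨d, rfl⟩ := Nat.exists_eq_add_of_le' hm
  rw [Real.dist_eq]
  exact (abs_cfConv_sub_le h n d).trans_lt hn

lemma one_le_cfVal (h : ∀ i, 1 ≤ a i) : 1 ≤ cfVal a :=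
  ge_of_tendsto' (tendsto_cfConv h) (one_le_cfConv h)

lemma cfVal_eq_add (h : ∀ i, 1 ≤ a (i + 1)) :
    cfVal a = a 0 + 1 / cfVal (fun i => a (i + 1)) := by
  have h1 := one_le_cfVal (a := fun i => a (i + 1)) h
  have h2 : Tendsto (fun n => cfConv a (n + 1)) atTop
      (nhds (a 0 + 1 / cfVal (fun i => a (i + 1)))) :=
    tendsto_const_nhds.add (tendsto_const_nhds.div (tendsto_cfConv h) (by positivity))
  exact ((tendsto_add_atTop_iff_nat 1).1 h2).limUnder_eq

end ContinuedFractions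

/-- The value `[0; α_{k+1}, α_{k+2}, ...]`. -/
noncomputable def rightTail (α : ℤ → ℕ) (k : ℤ) : ℝ :=
  1 / cfVal (fun n : ℕ => (α (k + 1 + n) : ℝ))

/-- The reversed sequence. -/
def revSeq (α : ℤ → ℕ) : ℤ → ℕ := fun k => α (-k)

/-- The value `[0; α_{k-1}, α_{k-2}, ...]`. -/
noncomputable def leftTail (α : ℤ → ℕ) (k : ℤ) : ℝ := rightTail (revSeq α) (-k)

section Tails

variable {α : ℤ → ℕ}

lemma revSeq_revSeq (α : ℤ → ℕ) : revSeq (revSeq α) = α := by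
  funext k
  simp [revSeq]

lemma leftTail_revSeq (α : ℤ → ℕ) (k : ℤ) : leftTail (revSeq α) k = rightTail α (-k) := by
  simp [leftTail, revSeq_revSeq]

lemma rightTail_congr {β : ℤ → ℕ} {k l : ℤ} (h : ∀ n : ℕ, α (k + 1 + n) = β (l + 1 + n)) :
    rightTail α k = rightTail β l := by
  simp only [rightTail, h]

lemma rightTail_pos (h : ∀ k, 0 < α k) (k : ℤ) : 0 < rightTail α k := by
  have := one_le_cfVal (a := fun n : ℕ => (α (k + 1 + n) : ℝ))
    fun i => by exact_mod_cast h _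
  unfold rightTail
  positivity

lemma rightTail_eq (h : ∀ k, 0 < α k) (k : ℤ) :
    rightTail α k = 1 / (α (k + 1) + rightTail α (k + 1)) := by
  rw [rightTail, cfVal_eq_add fun i => by exact_mod_cast h _]
  simp only [rightTail, Nat.cast_zero, add_zero, Nat.cast_add, Nat.cast_one]
  congr! 6 with n
  ring_nf

lemma lambdaVal_eq (h : ∀ k, 0 < α k) (k : ℤ) :
    lambdaVal α k = α k + rightTail α k + leftTail α k := by
  rw [lambdaVal, cfVal_eq_add fun i => by exact_mod_cast h _,
    cfVal_eq_add (a := fun n => if n = 0 then 0 else (α (k - n) : ℝ))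
      fun i => by simpa [Nat.one_le_iff_ne_zero] using (h _).ne']
  simp only [rightTail, leftTail, revSeq, Nat.cast_zero, add_zero, Nat.cast_add, Nat.cast_one,
    if_true, zero_add, Nat.succ_ne_zero, if_false]
  congr! 6 with n n <;> ring_nf

lemma lambdaVal_revSeq (h : ∀ k, 0 < α k) (k : ℤ) :
    lambdaVal (revSeq α) k = lambdaVal α (-k) := by
  rw [lambdaVal_eq h, lambdaVal_eq (α := revSeq α) fun k => h _, leftTail_revSeq, leftTail,
    neg_neg, revSeq]
  ring

end Tails

section Admissible

variable {α : ℤ → ℕ}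

/-- Sequences over `{1, 2}` avoiding the words `121`, `22212` and `21222`. -/
structure Admissible (α : ℤ → ℕ) : Prop where
  digit : ∀ k, α k = 1 ∨ α k = 2
  avoid_121 : ∀ k, ¬(α (k - 1) = 1 ∧ α k = 2 ∧ α (k + 1) = 1)
  avoid_22212 : ∀ k, ¬(α (k - 2) = 2 ∧ α (k - 1) = 2 ∧ α k = 2 ∧ α (k + 1) = 1 ∧ α (k + 2) = 2)
  avoid_21222 : ∀ k, ¬(α (k + 2) = 2 ∧ α (k + 1) = 2 ∧ α k = 2 ∧ α (k - 1) = 1 ∧ α (k - 2) = 2)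

lemma revSeq_neg_add (α : ℤ → ℕ) (k l : ℤ) : revSeq α (-k + l) = α (k - l) := by
  rw [revSeq]
  ring_nf

lemma revSeq_neg_sub (α : ℤ → ℕ) (k l : ℤ) : revSeq α (-k - l) = α (k + l) := by
  rw [revSeq]
  ring_nf

lemma revSeq_add (α : ℤ → ℕ) (k l : ℤ) : revSeq α (k + l) = α (-k - l) := by
  rw [revSeq]
  ring_nf

lemma revSeq_sub (α : ℤ → ℕ) (k l : ℤ) : revSeq α (k - l) = α (-k + l) := by
  rw [revSeq]
  ring_nf

lemma Admissible.rev (h : Admissible α) : Admissible (revSeq α) where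
  digit k := h.digit _
  avoid_121 k := by
    rw [revSeq_sub, revSeq_add]
    have := h.avoid_121 (-k)
    unfold revSeq
    tauto
  avoid_22212 k := by
    rw [revSeq_sub, revSeq_sub, revSeq_add, revSeq_add]
    exact h.avoid_21222 (-k)
  avoid_21222 k := by
    rw [revSeq_sub, revSeq_sub, revSeq_add, revSeq_add]
    exact h.avoid_22212 (-k)

lemma Admissible.pos (h : Admissible α) (k : ℤ) : 0 < α k := by
  have := h.digit k
  omega

lemma leftTail_pos (h : ∀ k, 0 < α k) (k : ℤ) : 0 < leftTail α k :=
  rightTail_pos (fun _ => h _) _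

lemma rightTail_step (h : ∀ k, 0 < α k) {k : ℤ} (l : ℤ) {d : ℕ} (hd : α l = d)
    (hl : l = k + 1 := by ring) : rightTail α k = 1 / (d + rightTail α l) := by
  rw [rightTail_eq h, ← hl, hd]

lemma leftTail_step (h : ∀ k, 0 < α k) {k : ℤ} (l : ℤ) {d : ℕ} (hd : α l = d)
    (hl : l = k - 1 := by ring) : leftTail α k = 1 / (d + leftTail α l) :=
  rightTail_step (α := revSeq α) (fun _ => h _) (-l) (by rw [revSeq, neg_neg, hd]) (by rw [hl]; ring)

lemma rightTail_mem (h : ∀ k, α k = 1 ∨ α k = 2) (k : ℤ) :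
    4 / 11 ≤ rightTail α k ∧ rightTail α k ≤ 11 / 15 := by
  have hp : ∀ k, 0 < α k := fun k => by have := h k; omega
  have lower : ∀ c : ℝ, (∀ k, rightTail α k ≤ c) → ∀ k, 1 / (2 + c) ≤ rightTail α k := by
    intro c hc k
    have h1 := rightTail_pos hp (k + 1)
    have h2 := hc (k + 1)
    rw [rightTail_eq hp]
    rcases h (k + 1) with h3 | h3 <;> rw [h3] <;> push_cast <;>
      exact one_div_le_one_div_of_le (by linarith) (by linarith)
  have upper : ∀ c : ℝ, 0 ≤ c → (∀ k, c ≤ rightTail α k) → ∀ k, rightTail α k ≤ 1 / (1 + c) := by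
    intro c hc0 hc k
    have h2 := hc (k + 1)
    rw [rightTail_eq hp]
    rcases h (k + 1) with h3 | h3 <;> rw [h3] <;> push_cast <;>
      exact one_div_le_one_div_of_le (by linarith) (by linarith)
  have h1 := lower _ (upper 0 le_rfl fun k => (rightTail_pos hp k).le)
  have h2 := lower _ (upper _ (by norm_num) h1)
  have h3 := upper _ (by norm_num) h2
  exact ⟨(by norm_num : (4 / 11 : ℝ) = _).trans_le (h2 k),
    (h3 k).trans_eq (by norm_num)⟩

lemma leftTail_mem (h : ∀ k, α k = 1 ∨ α k = 2) (k : ℤ) :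
    4 / 11 ≤ leftTail α k ∧ leftTail α k ≤ 11 / 15 :=
  rightTail_mem (fun _ => h _) _

lemma digit_of_lambdaVal_lt (hp : ∀ k, 0 < α k) (h : ∀ k, lambdaVal α k < 3.0834) (k : ℤ) :
    α k = 1 ∨ α k = 2 := by
  have h3 : ∀ k, α k ≤ 3 := by
    intro k
    have h1 := h k
    rw [lambdaVal_eq hp] at h1
    have h2 := rightTail_pos hp k
    have h3 := leftTail_pos hp k
    have h4 : (α k : ℝ) < 4 := by norm_num at h1; linarith
    have : α k < 4 := by exact_mod_cast h4
    omega
  have quarter : ∀ β : ℤ → ℕ, (∀ k, 0 < β k) → (∀ k, β k ≤ 3) → ∀ k, 1 / 4 ≤ rightTail β k := by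
    intro β hb hb3 k
    have h1 := rightTail_pos hb (k + 1)
    have h2 : rightTail β (k + 1) ≤ 1 := by
      have h4 := rightTail_pos hb (k + 1 + 1)
      have h5 : (1 : ℝ) ≤ β (k + 1 + 1) := by exact_mod_cast hb _
      rw [rightTail_eq hb, div_le_one (by linarith)]
      linarith
    have h6 : (β (k + 1) : ℝ) ≤ 3 := by exact_mod_cast hb3 _
    rw [rightTail_eq hb]
    exact one_div_le_one_div_of_le (by positivity) (by linarith)
  by_contra hk
  have h4 : α k = 3 := by
    have := h3 k
    have := hp k
    omega
  have h5 := quarter α hp h3 k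
  have h6 : 1 / 4 ≤ leftTail α k := quarter (revSeq α) (fun _ => hp _) (fun _ => h3 _) _
  have h7 := h k
  rw [lambdaVal_eq hp, h4] at h7
  norm_num at h7
  linarith

lemma not_22212_of_lambdaVal_lt (hd : ∀ k, α k = 1 ∨ α k = 2)
    (h : ∀ k, lambdaVal α k < 3.0834) (k : ℤ) :
    ¬(α (k - 2) = 2 ∧ α (k - 1) = 2 ∧ α k = 2 ∧ α (k + 1) = 1 ∧ α (k + 2) = 2) := by
  have hp : ∀ k, 0 < α k := fun k => by have := hd k; omega
  rintro ⟨h1, h2, h3, h4, h5⟩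
  have hk := h k
  have hr := (rightTail_mem hd (k + 2)).1
  have hl := (leftTail_mem hd (k - 2)).1
  rw [lambdaVal_eq hp, h3, rightTail_step hp (k + 1) h4, rightTail_step hp (k + 2) h5,
    leftTail_step hp (k - 1) h2, leftTail_step hp (k - 2) h1] at hk
  set r := rightTail α (k + 2)
  set l := leftTail α (k - 2)
  have h6 : (7 / 10 : ℝ) ≤ 1 / ((1 : ℕ) + 1 / ((2 : ℕ) + r)) := by
    push_cast
    rw [one_add_div (by positivity), one_div_div, div_le_div_iff₀ (by norm_num) (by positivity)]
    linarith
  have h7 : (2 / 5 : ℝ) ≤ 1 / ((2 : ℕ) + 1 / ((2 : ℕ) + l)) := by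
    push_cast
    have : 1 / (2 + l) ≤ 1 / 2 := one_div_le_one_div_of_le (by norm_num) (by linarith)
    rw [div_le_div_iff₀ (by norm_num) (by positivity)]
    linarith
  norm_num at hk h6 h7
  linarith

lemma admissible_of_lambdaVal_lt (hp : ∀ k, 0 < α k) (h : ∀ k, lambdaVal α k < 3.0834) :
    Admissible α where
  digit := digit_of_lambdaVal_lt hp h
  avoid_121 k := by
    have hd := digit_of_lambdaVal_lt hp h
    rintro ⟨h1, h2, h3⟩
    have hk := h k
    have hr := (rightTail_mem hd (k + 1))
    have hl := (leftTail_mem hd (k - 1))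
    rw [lambdaVal_eq hp, h2, rightTail_step hp (k + 1) h3, leftTail_step hp (k - 1) h1] at hk
    have h4 : 1 / (1 + 11 / 15) ≤ 1 / ((1 : ℕ) + rightTail α (k + 1)) :=
      one_div_le_one_div_of_le (by push_cast; linarith) (by push_cast; linarith)
    have h5 : 1 / (1 + 11 / 15) ≤ 1 / ((1 : ℕ) + leftTail α (k - 1)) :=
      one_div_le_one_div_of_le (by push_cast; linarith) (by push_cast; linarith)
    norm_num at hk h4 h5
    linarith
  avoid_22212 := not_22212_of_lambdaVal_lt (digit_of_lambdaVal_lt hp h) h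
  avoid_21222 k := by
    have := not_22212_of_lambdaVal_lt (α := revSeq α) (fun _ => digit_of_lambdaVal_lt hp h _)
      (fun k => by rw [lambdaVal_revSeq hp]; exact h _) (-k)
    rwa [revSeq_neg_sub, revSeq_neg_sub, revSeq_neg_add, revSeq_neg_add, revSeq, neg_neg] at this

end Admissible

section ExtremalTails

variable {α : ℤ → ℕ}

/-- The value of `[0; 1, 1, 1, 2, 2, 2, ...]` with period `111222`. -/
noncomputable def tailOnes : ℝ := (2 * Real.sqrt 210 - 17) / 19

/-- The value of `[0; 2, 2, 2, 1, 1, 1, ...]` with period `222111`. -/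
noncomputable def tailTwos : ℝ := (2 * Real.sqrt 210 - 17) / 29

/-- The value of `[0; 1, 2, 2, 2, 1, 1, ...]` with period `122211`. -/
noncomputable def tailMax : ℝ := (Real.sqrt 210 - 6) / 12

lemma sqrt_210_mem : 14.4913 < Real.sqrt 210 ∧ Real.sqrt 210 < 14.4914 :=
  ⟨Real.lt_sqrt_of_sq_lt (by norm_num), (Real.sqrt_lt' (by norm_num)).2 (by norm_num)⟩

lemma sq_sqrt_210 : Real.sqrt 210 ^ 2 = 210 := Real.sq_sqrt (by norm_num)

lemma tailOnes_mem : 0.63 < tailOnes ∧ tailOnes < 0.631 := by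
  obtain ⟨h1, h2⟩ := sqrt_210_mem
  unfold tailOnes
  norm_num at *
  constructor <;> linarith

lemma tailTwos_mem : 0.413 < tailTwos ∧ tailTwos < 0.414 := by
  obtain ⟨h1, h2⟩ := sqrt_210_mem
  unfold tailTwos
  norm_num at *
  constructor <;> linarith

lemma tailMax_mem : 0.707 < tailMax ∧ tailMax < 0.708 := by
  obtain ⟨h1, h2⟩ := sqrt_210_mem
  unfold tailMax
  norm_num at *
  constructor <;> linarith

lemma tailMax_eq : tailMax = 1 / (1 + tailTwos) := by
  have h := tailTwos_mem.1
  rw [eq_div_iff (by norm_num at h; linarith), tailMax, tailTwos]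
  linear_combination 2 / 348 * sq_sqrt_210

lemma tailOnes_eq : tailOnes = (1 + tailMax) / (2 + tailMax) := by
  have h := tailMax_mem.1
  rw [eq_div_iff (by norm_num at h; linarith), tailOnes, tailMax]
  linear_combination 2 / 228 * sq_sqrt_210

lemma tailOnes_eq' : tailOnes = (2 + tailTwos) / (3 + 2 * tailTwos) := by
  have h := tailTwos_mem.1
  rw [eq_div_iff (by norm_num at h; linarith), tailOnes, tailTwos]
  linear_combination 8 / 551 * sq_sqrt_210

lemma tailTwos_eq : tailTwos = (5 + 2 * tailOnes) / (12 + 5 * tailOnes) := by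
  have h := tailOnes_mem.1
  rw [eq_div_iff (by norm_num at h; linarith), tailOnes, tailTwos]
  linear_combination 20 / 551 * sq_sqrt_210

lemma Admissible.tail_approx (h : Admissible α) (n : ℕ) :
    (∀ k, α k = 1 → α (k + 1) = 2 → tailTwos - (1 / 4) ^ n ≤ rightTail α k) ∧
    (∀ k, α (k - 2) = 2 → α (k - 1) = 2 → α k = 2 → α (k + 1) = 1 →
      rightTail α k ≤ tailOnes + (1 / 4) ^ n) := by
  obtain ⟨hP1, hP2⟩ := tailOnes_mem
  obtain ⟨hQ1, hQ2⟩ := tailTwos_mem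
  have hpos := rightTail_pos h.pos
  norm_num at hP1 hP2 hQ1 hQ2
  induction n with
  | zero =>
    refine ⟨fun k _ _ => ?_, fun k _ _ _ _ => ?_⟩
    · have := hpos k
      rw [pow_zero]
      linarith
    · have := (rightTail_mem h.digit k).2
      rw [pow_zero]
      linarith
  | succ n ih =>
    obtain ⟨ihQ, ihP⟩ := ih
    set ε : ℝ := (1 / 4) ^ n with hε
    have hε0 : 0 < ε := by positivity
    rw [pow_succ, ← hε]
    refine ⟨fun k h0 h1 => ?_, fun k h0 h1 h2 h3 => ?_⟩
    · have h2 : α (k + 2) = 2 := by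
        have := h.avoid_121 (k + 1)
        have := h.digit (k + 2)
        ring_nf at *
        tauto
      have e2 := rightTail_step h.pos (k := k + 1) (k + 2) h2
      have e1 := rightTail_step h.pos (k + 1) h1
      rcases h.digit (k + 3) with h3 | h3
      · have e3 := rightTail_step h.pos (k := k + 2) (k + 3) h3
        have hy := hpos (k + 3)
        have hy' := (rightTail_mem h.digit (k + 3)).2
        rw [e1, e2, e3]
        set y := rightTail α (k + 3)
        have : 1 / (((2 : ℕ) : ℝ) + 1 / (((2 : ℕ) : ℝ) + 1 / (((1 : ℕ) : ℝ) + y))) =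
            (3 + 2 * y) / (7 + 5 * y) := by
          push_cast
          field_simp
          ring
        rw [this, le_div_iff₀ (by positivity)]
        nlinarith
      · have e3 := rightTail_step h.pos (k := k + 2) (k + 3) h3
        have hx := hpos (k + 3)
        have hxle : rightTail α (k + 3) ≤ tailOnes + ε := by
          rcases h.digit (k + 4) with h4 | h4
          · have := ihP (k + 3)
            ring_nf at *
            tauto
          · have e4 := rightTail_step h.pos (k := k + 3) (k + 4) h4
            have h5 := hpos (k + 4)
            have : 1 / (((2 : ℕ) : ℝ) + rightTail α (k + 4)) ≤ 1 / 2 :=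
              one_div_le_one_div_of_le (by norm_num) (by push_cast; linarith)
            rw [e4]
            linarith
        rw [e1, e2, e3]
        set x := rightTail α (k + 3)
        have : 1 / (((2 : ℕ) : ℝ) + 1 / (((2 : ℕ) : ℝ) + 1 / (((2 : ℕ) : ℝ) + x))) =
            (5 + 2 * x) / (12 + 5 * x) := by
          push_cast
          field_simp
          ring
        have hQ := tailTwos_eq
        rw [eq_div_iff (by linarith)] at hQ
        have hm := mul_le_mul_of_nonneg_left hxle (by linarith : 0 ≤ 5 * tailTwos - 2)
        rw [this, le_div_iff₀ (by positivity)]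
        nlinarith
    · have h4 : α (k + 2) = 1 := by
        have := h.avoid_22212 k
        have := h.digit (k + 2)
        tauto
      have e1 := rightTail_step h.pos (k + 1) h3
      have e2 := rightTail_step h.pos (k := k + 1) (k + 2) h4
      rcases h.digit (k + 3) with h5 | h5
      · have e3 := rightTail_step h.pos (k := k + 2) (k + 3) h5
        have hy := hpos (k + 3)
        have hyle : tailTwos - ε ≤ rightTail α (k + 3) := by
          rcases h.digit (k + 4) with h6 | h6
          · have e4 := rightTail_step h.pos (k := k + 3) (k + 4) h6
            have h7 := (rightTail_mem h.digit (k + 4)).2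
            have h8 := hpos (k + 4)
            have : 1 / 2 ≤ 1 / (((1 : ℕ) : ℝ) + rightTail α (k + 4)) :=
              one_div_le_one_div_of_le (by positivity) (by push_cast; linarith)
            rw [e4]
            linarith
          · exact ihQ (k + 3) h5 (by ring_nf at *; exact h6)
        rw [e1, e2, e3]
        set y := rightTail α (k + 3)
        have : 1 / (((1 : ℕ) : ℝ) + 1 / (((1 : ℕ) : ℝ) + 1 / (((1 : ℕ) : ℝ) + y))) =
            (2 + y) / (3 + 2 * y) := by
          push_cast
          field_simp
          ring
        have hP := tailOnes_eq'
        rw [eq_div_iff (by linarith)] at hP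
        have hm := mul_le_mul_of_nonneg_left hyle (by linarith : 0 ≤ 2 * tailOnes - 1)
        rw [this, div_le_iff₀ (by positivity)]
        nlinarith
      · have e3 := rightTail_step h.pos (k := k + 2) (k + 3) h5
        have hy := hpos (k + 3)
        rw [e1, e2, e3]
        set y := rightTail α (k + 3)
        have : 1 / (((1 : ℕ) : ℝ) + 1 / (((1 : ℕ) : ℝ) + 1 / (((2 : ℕ) : ℝ) + y))) =
            (3 + y) / (5 + 2 * y) := by
          push_cast
          field_simp
          ring
        rw [this, div_le_iff₀ (by positivity)]
        nlinarith

lemma le_of_forall_le_add_quarter_pow {x y : ℝ} (h : ∀ n : ℕ, x ≤ y + (1 / 4) ^ n) : x ≤ y := by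
  have h1 := (tendsto_pow_atTop_nhds_zero_of_lt_one (by norm_num : (0 : ℝ) ≤ 1 / 4)
    (by norm_num)).const_add y
  rw [add_zero] at h1
  exact ge_of_tendsto' h1 h

lemma Admissible.tailTwos_le_rightTail (h : Admissible α) {k : ℤ} (h0 : α k = 1) :
    tailTwos ≤ rightTail α k := by
  rcases h.digit (k + 1) with h1 | h1
  · have hr := (rightTail_mem h.digit (k + 1))
    have hQ := tailTwos_mem.2
    norm_num at hQ
    rw [rightTail_step h.pos (k + 1) h1, le_div_iff₀ (by push_cast; linarith)]
    push_cast
    nlinarith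
  · exact le_of_forall_le_add_quarter_pow fun n => by
      linarith [(h.tail_approx n).1 k h0 h1]

lemma Admissible.rightTail_le_tailMax (h : Admissible α) (k : ℤ) : rightTail α k ≤ tailMax := by
  have hQ := tailTwos_mem
  norm_num at hQ
  have hr := (rightTail_mem h.digit (k + 1))
  rw [tailMax_eq]
  rcases h.digit (k + 1) with h1 | h1
  · rw [rightTail_step h.pos (k + 1) h1]
    push_cast
    exact one_div_le_one_div_of_le (by linarith) (by linarith [h.tailTwos_le_rightTail h1])
  · rw [rightTail_step h.pos (k + 1) h1]
    push_cast
    exact one_div_le_one_div_of_le (by linarith) (by linarith)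

lemma Admissible.leftTail_le_tailMax (h : Admissible α) (k : ℤ) : leftTail α k ≤ tailMax :=
  h.rev.rightTail_le_tailMax _

lemma Admissible.rightTail_le_tailOnes (h : Admissible α) {k : ℤ} (h0 : α (k - 2) = 2)
    (h1 : α (k - 1) = 2) (h2 : α k = 2) : rightTail α k ≤ tailOnes := by
  rcases h.digit (k + 1) with h3 | h3
  · exact le_of_forall_le_add_quarter_pow fun n => (h.tail_approx n).2 k h0 h1 h2 h3
  · have hr := (rightTail_mem h.digit (k + 1))
    have hP := tailOnes_mem.1
    norm_num at hP
    rw [rightTail_step h.pos (k + 1) h3, div_le_iff₀ (by push_cast; linarith)]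
    push_cast
    nlinarith

lemma Admissible.leftTail_le_tailOnes (h : Admissible α) {k : ℤ} (h0 : α (k + 2) = 2)
    (h1 : α (k + 1) = 2) (h2 : α k = 2) : leftTail α k ≤ tailOnes :=
  h.rev.rightTail_le_tailOnes (by rwa [revSeq_neg_sub]) (by rwa [revSeq_neg_sub])
    (by rwa [revSeq, neg_neg])

lemma gap_bottom_eq : 4 * Real.sqrt 210 / 19 =
    2 + (1 + tailMax) / (2 + tailMax) + (2 + tailOnes) / (5 + 2 * tailOnes) := by
  have h : (2 + tailOnes) / (5 + 2 * tailOnes) = (2 * Real.sqrt 210 - 21) / 19 := by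
    have h := tailOnes_mem.1
    rw [div_eq_iff (by norm_num at h; linarith), tailOnes]
    linear_combination -8 / 361 * sq_sqrt_210
  rw [h, ← tailOnes_eq, tailOnes]
  ring

lemma Admissible.lambdaVal_le_of_22_11 (h : Admissible α) {k : ℤ} (h0 : α (k - 1) = 2)
    (h1 : α k = 2) (h2 : α (k + 1) = 1) (h3 : α (k + 2) = 1) :
    lambdaVal α k ≤ 4 * Real.sqrt 210 / 19 := by
  obtain ⟨hP1, hP2⟩ := tailOnes_mem
  obtain ⟨hM1, hM2⟩ := tailMax_mem
  norm_num at hP1 hP2 hM1 hM2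
  have hright : rightTail α k ≤ (1 + tailMax) / (2 + tailMax) := by
    have hz := h.rightTail_le_tailMax (k + 2)
    have hz0 := rightTail_pos h.pos (k + 2)
    rw [rightTail_step h.pos (k + 1) h2, rightTail_step h.pos (k := k + 1) (k + 2) h3]
    set z := rightTail α (k + 2)
    have : 1 / (((1 : ℕ) : ℝ) + 1 / (((1 : ℕ) : ℝ) + z)) = (1 + z) / (2 + z) := by
      push_cast
      field_simp
      ring
    rw [this, div_le_div_iff₀ (by positivity) (by linarith)]
    nlinarith
  have hleft : leftTail α k ≤ (2 + tailOnes) / (5 + 2 * tailOnes) := by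
    have hz0 := leftTail_pos h.pos (k - 2)
    rcases h.digit (k - 2) with h4 | h4
    · have hz := (leftTail_mem h.digit (k - 2)).2
      rw [leftTail_step h.pos (k - 1) h0, leftTail_step h.pos (k := k - 1) (k - 2) h4]
      set z := leftTail α (k - 2)
      have : 1 / (((2 : ℕ) : ℝ) + 1 / (((1 : ℕ) : ℝ) + z)) = (1 + z) / (3 + 2 * z) := by
        push_cast
        field_simp
        ring
      rw [this, div_le_div_iff₀ (by positivity) (by linarith)]
      nlinarith
    · have hz : leftTail α (k - 2) ≤ tailOnes :=
        h.leftTail_le_tailOnes (by ring_nf at *; exact h1) (by ring_nf at *; exact h0) h4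
      rw [leftTail_step h.pos (k - 1) h0, leftTail_step h.pos (k := k - 1) (k - 2) h4]
      set z := leftTail α (k - 2)
      have : 1 / (((2 : ℕ) : ℝ) + 1 / (((2 : ℕ) : ℝ) + z)) = (2 + z) / (5 + 2 * z) := by
        push_cast
        field_simp
        ring
      rw [this, div_le_div_iff₀ (by positivity) (by linarith)]
      nlinarith
  rw [lambdaVal_eq h.pos, h1, gap_bottom_eq]
  push_cast
  linarith

lemma Admissible.lambdaVal_le (h : Admissible α) {k : ℤ}
    (hr : ¬(α k = 2 ∧ α (k + 1) = 1 ∧ α (k + 2) = 2))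
    (hl : ¬(α k = 2 ∧ α (k - 1) = 1 ∧ α (k - 2) = 2)) :
    lambdaVal α k ≤ 4 * Real.sqrt 210 / 19 := by
  have hL := sqrt_210_mem.1
  norm_num at hL
  have h1 := (rightTail_mem h.digit k).2
  have h2 := (leftTail_mem h.digit k).2
  rcases h.digit k with h0 | h0
  · rw [lambdaVal_eq h.pos, h0]
    push_cast
    linarith
  rcases h.digit (k + 1) with h3 | h3 <;> rcases h.digit (k - 1) with h4 | h4
  · exact absurd ⟨h4, h0, h3⟩ (h.avoid_121 k)
  · have h5 : α (k + 2) = 1 := by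
      have := h.digit (k + 2)
      tauto
    exact h.lambdaVal_le_of_22_11 h4 h0 h3 h5
  · have h5 : α (k - 2) = 1 := by
      have := h.digit (k - 2)
      tauto
    have := h.rev.lambdaVal_le_of_22_11 (k := -k) (by rwa [revSeq_neg_sub])
      (by rwa [revSeq, neg_neg]) (by rwa [revSeq_neg_add]) (by rwa [revSeq_neg_add])
    rwa [lambdaVal_revSeq h.pos, neg_neg] at this
  · have h5 := (rightTail_mem h.digit (k + 1)).1
    have h6 := (leftTail_mem h.digit (k - 1)).1
    have h7 : 1 / (((2 : ℕ) : ℝ) + rightTail α (k + 1)) ≤ 1 / 2 :=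
      one_div_le_one_div_of_le (by norm_num) (by push_cast; linarith)
    have h8 : 1 / (((2 : ℕ) : ℝ) + leftTail α (k - 1)) ≤ 1 / 2 :=
      one_div_le_one_div_of_le (by norm_num) (by push_cast; linarith)
    rw [lambdaVal_eq h.pos, h0, rightTail_step h.pos (k + 1) h3, leftTail_step h.pos (k - 1) h4]
    push_cast at *
    linarith

end ExtremalTails

section Gap

variable {α : ℤ → ℕ}

lemma revSeq_eq_of_eq {l : ℤ} (m : ℤ) {d : ℕ} (hm : α m = d) (hl : l = -m := by ring) :
    revSeq α l = d := by
  rw [revSeq, hl, neg_neg, hm]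

lemma gap_top_lt : (74613 + 4096 * Real.sqrt 210) / 43449 < 3.0834 := by
  have := sqrt_210_mem.2
  rw [div_lt_iff₀ (by norm_num)]
  norm_num at *
  linarith

lemma gap_top_eq : (74613 + 4096 * Real.sqrt 210) / 43449 =
    2 + (2 + tailMax) / (5 + 3 * tailMax) +
      (64 * (1 + tailMax) + 45) / (91 * (1 + tailMax) + 64) := by
  have h := tailMax_mem.1
  norm_num at h
  have h1 : (2 + tailMax) / (5 + 3 * tailMax) = (2 * Real.sqrt 210 - 21) / 21 := by
    rw [div_eq_iff (by linarith), tailMax]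
    linear_combination -1 / 42 * sq_sqrt_210
  have h2 : (64 * (1 + tailMax) + 45) / (91 * (1 + tailMax) + 64) =
      (1484 - 2 * Real.sqrt 210) / 2069 := by
    rw [div_eq_iff (by linarith), tailMax]
    linear_combination 91 / 12414 * sq_sqrt_210
  rw [h1, h2]
  ring

lemma rightTail_eq_of_1221221 (hp : ∀ k, 0 < α k) {k : ℤ} (h1 : α (k + 1) = 1)
    (h2 : α (k + 2) = 2) (h3 : α (k + 3) = 2) (h4 : α (k + 4) = 1) (h5 : α (k + 5) = 2)
    (h6 : α (k + 6) = 2) (h7 : α (k + 7) = 1) :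
    rightTail α k = (64 * (α (k + 8) + rightTail α (k + 8)) + 45) /
      (91 * (α (k + 8) + rightTail α (k + 8)) + 64) := by
  have h8 := rightTail_pos hp (k + 8)
  rw [rightTail_step hp (k + 1) h1, rightTail_step hp (k := k + 1) (k + 2) h2,
    rightTail_step hp (k := k + 2) (k + 3) h3, rightTail_step hp (k := k + 3) (k + 4) h4,
    rightTail_step hp (k := k + 4) (k + 5) h5, rightTail_step hp (k := k + 5) (k + 6) h6,
    rightTail_step hp (k := k + 6) (k + 7) h7, rightTail_step hp (k := k + 7) (k + 8) rfl]
  set s : ℝ := α (k + 8) + rightTail α (k + 8)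
  have hs : 0 < s := by positivity
  push_cast
  field_simp
  ring

lemma Admissible.le_lambdaVal_of_112212212211 (h : Admissible α) {k : ℤ} (hm3 : α (k - 3) = 1)
    (hm2 : α (k - 2) = 1) (hm1 : α (k - 1) = 2) (h0 : α k = 2) (h1 : α (k + 1) = 1)
    (h2 : α (k + 2) = 2) (h3 : α (k + 3) = 2) (h4 : α (k + 4) = 1) (h5 : α (k + 5) = 2)
    (h6 : α (k + 6) = 2) (h7 : α (k + 7) = 1)
    (hle : 1 + leftTail α (k - 3) ≤ α (k + 8) + rightTail α (k + 8)) :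
    (74613 + 4096 * Real.sqrt 210) / 43449 ≤ lambdaVal α k := by
  have hu := h.leftTail_le_tailMax (k - 3)
  have hu0 := leftTail_pos h.pos (k - 3)
  rw [lambdaVal_eq h.pos, h0, rightTail_eq_of_1221221 h.pos h1 h2 h3 h4 h5 h6 h7,
    leftTail_step h.pos (k - 1) hm1, leftTail_step h.pos (k := k - 1) (k - 2) hm2,
    leftTail_step h.pos (k := k - 2) (k - 3) hm3, gap_top_eq]
  set u := leftTail α (k - 3)
  set s : ℝ := α (k + 8) + rightTail α (k + 8)
  set M := tailMax
  have hM : M < 1 := by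
    have := tailMax_mem.2
    norm_num at this
    linarith
  have hM0 : 0 < M := hu0.trans_le hu
  have hf : 1 / (((2 : ℕ) : ℝ) + 1 / (((1 : ℕ) : ℝ) + 1 / (((1 : ℕ) : ℝ) + u))) =
      (2 + M) / (5 + 3 * M) + (M - u) / ((5 + 3 * u) * (5 + 3 * M)) := by
    push_cast
    field_simp
    ring
  have hg : (64 * (1 + u) + 45) / (91 * (1 + u) + 64) =
      (64 * (1 + M) + 45) / (91 * (1 + M) + 64) -
        (M - u) / ((91 * (1 + u) + 64) * (91 * (1 + M) + 64)) := by
    field_simp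
    ring
  have hgs : (64 * (1 + u) + 45) / (91 * (1 + u) + 64) ≤ (64 * s + 45) / (91 * s + 64) := by
    rw [div_le_div_iff₀ (by positivity) (by linarith)]
    nlinarith
  have hfg : (M - u) / ((91 * (1 + u) + 64) * (91 * (1 + M) + 64)) ≤
      (M - u) / ((5 + 3 * u) * (5 + 3 * M)) :=
    div_le_div_of_nonneg_left (by linarith) (by positivity)
      (mul_le_mul (by linarith) (by linarith) (by positivity) (by positivity))
  rw [hf]
  push_cast
  linarith

/-- The word `212` occurs at position `k`. -/
def Has212 (α : ℤ → ℕ) (k : ℤ) : Prop := α k = 2 ∧ α (k + 1) = 1 ∧ α (k + 2) = 2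

lemma Has212.rev {k : ℤ} (hk : Has212 α k) : Has212 (revSeq α) (-k - 2) :=
  ⟨revSeq_eq_of_eq (k + 2) hk.2.2, revSeq_eq_of_eq (k + 1) hk.2.1, revSeq_eq_of_eq k hk.1⟩

lemma Admissible.right_of_has212 (h : Admissible α) {k : ℤ} (hk : Has212 α k) :
    α (k + 3) = 2 ∧ α (k + 4) = 1 := by
  obtain ⟨h0, h1, h2⟩ := hk
  have h3 : α (k + 3) = 2 := by
    have := h.avoid_121 (k + 2)
    have := h.digit (k + 3)
    ring_nf at *
    tauto
  have h4 : α (k + 4) = 1 := by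
    have := h.avoid_21222 (k + 2)
    have := h.digit (k + 4)
    ring_nf at *
    tauto
  exact ⟨h3, h4⟩

lemma Admissible.left_of_has212 (h : Admissible α) {k : ℤ} (hk : Has212 α k) :
    α (k - 1) = 2 ∧ α (k - 2) = 1 := by
  have := h.rev.right_of_has212 hk.rev
  simp only [revSeq] at this
  ring_nf at *
  exact this

lemma Admissible.not_112212211 (h : Admissible α) (hlt : ∀ k, lambdaVal α k < 3.0834) {k : ℤ}
    (hk : Has212 α k) : ¬(α (k - 3) = 1 ∧ α (k + 5) = 1) := by
  rintro ⟨hm3, h5⟩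
  obtain ⟨h3, h4⟩ := h.right_of_has212 hk
  obtain ⟨hm1, hm2⟩ := h.left_of_has212 hk
  obtain ⟨h0, h1, h2⟩ := hk
  have hr := (rightTail_mem h.digit (k + 5)).2
  have hr0 := rightTail_pos h.pos (k + 5)
  have hl := (leftTail_mem h.digit (k - 3)).2
  have hl0 := leftTail_pos h.pos (k - 3)
  have := hlt k
  rw [lambdaVal_eq h.pos, h0, rightTail_step h.pos (k + 1) h1,
    rightTail_step h.pos (k := k + 1) (k + 2) h2, rightTail_step h.pos (k := k + 2) (k + 3) h3,
    rightTail_step h.pos (k := k + 3) (k + 4) h4, rightTail_step h.pos (k := k + 4) (k + 5) h5,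
    leftTail_step h.pos (k - 1) hm1, leftTail_step h.pos (k := k - 1) (k - 2) hm2,
    leftTail_step h.pos (k := k - 2) (k - 3) hm3] at this
  set r := rightTail α (k + 5)
  set l := leftTail α (k - 3)
  have hf : 0.3796 ≤ 1 / (((2 : ℕ) : ℝ) + 1 / (((1 : ℕ) : ℝ) + 1 / (((1 : ℕ) : ℝ) + l))) := by
    have : 1 / (((2 : ℕ) : ℝ) + 1 / (((1 : ℕ) : ℝ) + 1 / (((1 : ℕ) : ℝ) + l))) =
        (2 + l) / (5 + 3 * l) := by
      push_cast
      field_simp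
      ring
    rw [this, le_div_iff₀ (by positivity)]
    norm_num
    linarith
  have hg : 0.7041 ≤ 1 / (((1 : ℕ) : ℝ) + 1 / (((2 : ℕ) : ℝ) + 1 / (((2 : ℕ) : ℝ) +
      1 / (((1 : ℕ) : ℝ) + 1 / (((1 : ℕ) : ℝ) + r))))) := by
    have : 1 / (((1 : ℕ) : ℝ) + 1 / (((2 : ℕ) : ℝ) + 1 / (((2 : ℕ) : ℝ) +
        1 / (((1 : ℕ) : ℝ) + 1 / (((1 : ℕ) : ℝ) + r))))) = (12 + 7 * r) / (17 + 10 * r) := by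
      push_cast
      field_simp
      ring
    rw [this, le_div_iff₀ (by positivity)]
    norm_num
    linarith
  norm_num at *
  linarith

lemma Admissible.not_11221221221 (h : Admissible α)
    (hlt : ∀ k, lambdaVal α k < (74613 + 4096 * Real.sqrt 210) / 43449) {k : ℤ}
    (hk : Has212 α k) : ¬(α (k - 3) = 1 ∧ α (k + 5) = 2) := by
  rintro ⟨hm3, h5⟩
  obtain ⟨h3, h4⟩ := h.right_of_has212 hk
  obtain ⟨hm1, hm2⟩ := h.left_of_has212 hk
  have hk3 : Has212 α (k + 3) := ⟨h3, by ring_nf at *; exact h4, by ring_nf at *; exact h5⟩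
  obtain ⟨h6, h7⟩ : α (k + 6) = 2 ∧ α (k + 7) = 1 := by
    have := h.right_of_has212 hk3
    ring_nf at *
    exact this
  obtain ⟨h0, h1, h2⟩ := hk
  by_cases hle : 1 + leftTail α (k - 3) ≤ α (k + 8) + rightTail α (k + 8)
  · exact (hlt k).not_ge
      (h.le_lambdaVal_of_112212212211 hm3 hm2 hm1 h0 h1 h2 h3 h4 h5 h6 h7 hle)
  · have h8 : α (k + 8) = 1 := by
      refine (h.digit (k + 8)).resolve_right fun h8 => hle ?_
      have := rightTail_pos h.pos (k + 8)
      have := (leftTail_mem h.digit (k - 3)).2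
      rw [h8]
      push_cast
      linarith
    have hle' : 1 + leftTail (revSeq α) (-(k + 5) - 3) ≤
        revSeq α (-(k + 5) + 8) + rightTail (revSeq α) (-(k + 5) + 8) := by
      have e1 : rightTail (revSeq α) (-(k + 5) + 8) = leftTail α (k - 3) := by
        rw [leftTail]
        ring_nf
      rw [leftTail_revSeq, e1, revSeq_eq_of_eq (k - 3) hm3, show -(-(k + 5) - 3) = k + 8 by ring]
      rw [h8] at hle
      push_cast at *
      linarith
    have := h.rev.le_lambdaVal_of_112212212211 (k := -(k + 5))
      (revSeq_eq_of_eq (k + 8) h8) (revSeq_eq_of_eq (k + 7) h7) (revSeq_eq_of_eq (k + 6) h6)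
      (revSeq_eq_of_eq (k + 5) h5) (revSeq_eq_of_eq (k + 4) h4) (revSeq_eq_of_eq (k + 3) h3)
      (revSeq_eq_of_eq (k + 2) h2) (revSeq_eq_of_eq (k + 1) h1) (revSeq_eq_of_eq k h0)
      (revSeq_eq_of_eq (k - 1) hm1) (revSeq_eq_of_eq (k - 2) hm2) hle'
    rw [lambdaVal_revSeq h.pos] at this
    exact (hlt _).not_ge this

lemma Admissible.has212_add_three (h : Admissible α)
    (hlt : ∀ k, lambdaVal α k < (74613 + 4096 * Real.sqrt 210) / 43449) {k : ℤ}
    (hk : Has212 α k) : Has212 α (k + 3) := by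
  obtain ⟨h3, h4⟩ := h.right_of_has212 hk
  have h5 : α (k + 5) = 2 := by
    refine (h.digit _).resolve_left fun h5 => ?_
    rcases h.digit (k - 3) with hm3 | hm3
    · exact h.not_112212211 (fun k => (hlt k).trans gap_top_lt) hk ⟨hm3, h5⟩
    · exact h.rev.not_11221221221 (fun k => by rw [lambdaVal_revSeq h.pos]; exact hlt _) hk.rev
        ⟨revSeq_eq_of_eq (k + 5) h5, revSeq_eq_of_eq (k - 3) hm3⟩
  exact ⟨h3, by ring_nf at *; exact h4, by ring_nf at *; exact h5⟩

lemma Admissible.has212_sub_three (h : Admissible α)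
    (hlt : ∀ k, lambdaVal α k < (74613 + 4096 * Real.sqrt 210) / 43449) {k : ℤ}
    (hk : Has212 α k) : Has212 α (k - 3) := by
  have := (h.rev.has212_add_three (fun k => by rw [lambdaVal_revSeq h.pos]; exact hlt _)
    hk.rev).rev
  rw [revSeq_revSeq] at this
  ring_nf at *
  exact this

lemma Admissible.has212_add_three_mul (h : Admissible α)
    (hlt : ∀ k, lambdaVal α k < (74613 + 4096 * Real.sqrt 210) / 43449) {k : ℤ}
    (hk : Has212 α k) (n : ℤ) : Has212 α (k + 3 * n) := by
  induction n with
  | zero => simpa using hk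
  | succ n ih => exact (by ring : k + 3 * ((n : ℤ) + 1) = k + 3 * n + 3) ▸
      h.has212_add_three hlt ih
  | pred n ih => exact (by ring : k + 3 * (-(n : ℤ) - 1) = k + 3 * -n - 3) ▸
      h.has212_sub_three hlt ih

lemma exists_has212_of_lt_lambdaVal (h : Admissible α) {k : ℤ}
    (hk : 4 * Real.sqrt 210 / 19 < lambdaVal α k) : ∃ j, Has212 α j := by
  by_contra! hno
  refine hk.not_ge (h.lambdaVal_le (hno k) fun hl => hno (k - 2) ?_)
  obtain ⟨h0, h1, h2⟩ := hl
  refine ⟨h2, ?_, ?_⟩ <;> ring_nf at * <;> assumption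

end Gap

section Realization

variable {α : ℤ → ℕ}

lemma markovValue_eq_of_isGreatest {x : ℝ} (hle : ∀ k, lambdaVal α k ≤ x)
    (hex : ∃ k, lambdaVal α k = x) : markovValue α = x := by
  obtain ⟨k, hk⟩ := hex
  exact le_antisymm (ciSup_le hle) (hk ▸ le_ciSup ⟨x, forall_mem_range.2 hle⟩ k)

lemma mem_markovSpectrum_of_isGreatest {x : ℝ} (hp : ∀ k, 0 < α k)
    (hle : ∀ k, lambdaVal α k ≤ x) (hex : ∃ k, lambdaVal α k = x) : x ∈ markovSpectrum :=
  ⟨α, hp, ⟨x, forall_mem_range.2 hle⟩, markovValue_eq_of_isGreatest hle hex⟩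

lemma gap_bottom_lt : 4 * Real.sqrt 210 / 19 < 3.0509 := by
  have := sqrt_210_mem.2
  norm_num at *
  linarith

lemma lt_gap_top : 3.0833 < (74613 + 4096 * Real.sqrt 210) / 43449 := by
  have := sqrt_210_mem.1
  rw [lt_div_iff₀ (by norm_num)]
  norm_num at *
  linarith

lemma sqrt_85_mem : 9.219 < Real.sqrt 85 ∧ Real.sqrt 85 < 9.22 :=
  ⟨Real.lt_sqrt_of_sq_lt (by norm_num), (Real.sqrt_lt' (by norm_num)).2 (by norm_num)⟩

lemma rightTail_of_period_122 (hp : ∀ k, 0 < α k) (hper : ∀ k, α (k + 3) = α k) {k : ℤ}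
    (h1 : α (k + 1) = 1) (h2 : α (k + 2) = 2) (h3 : α (k + 3) = 2) :
    rightTail α k = (Real.sqrt 85 - 5) / 6 := by
  have e := rightTail_congr (α := α) (β := α) (k := k + 3) (l := k) fun n => by
    rw [← hper (k + 1 + n)]
    ring_nf
  have h0 := rightTail_pos hp k
  have h4 : rightTail α k = (5 + 2 * rightTail α k) / (7 + 3 * rightTail α k) := by
    conv_lhs => rw [rightTail_step hp (k + 1) h1, rightTail_step hp (k := k + 1) (k + 2) h2,
      rightTail_step hp (k := k + 2) (k + 3) h3, e]
    push_cast
    field_simp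
    ring
  rw [eq_div_iff (by positivity)] at h4
  have h5 : Real.sqrt 85 = 6 * rightTail α k + 5 := by
    rw [Real.sqrt_eq_iff_mul_self_eq (by norm_num) (by positivity)]
    linarith
  rw [h5]
  ring

lemma rightTail_of_period_212 (hp : ∀ k, 0 < α k) (hper : ∀ k, α (k + 3) = α k) {k : ℤ}
    (h1 : α (k + 1) = 2) (h2 : α (k + 2) = 1) (h3 : α (k + 3) = 2) :
    rightTail α k = (Real.sqrt 85 - 7) / 6 := by
  have h4 := rightTail_of_period_122 hp hper (k := k + 1) (by ring_nf at *; exact h2)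
    (by ring_nf at *; exact h3) (by rw [hper, h1])
  have := sqrt_85_mem.1
  norm_num at this
  rw [rightTail_step hp (k + 1) h1, h4, div_eq_iff (by push_cast; linarith)]
  push_cast
  linear_combination -1 / 36 * Real.sq_sqrt (by norm_num : (0 : ℝ) ≤ 85)

lemma lambdaVal_of_period_212 (hp : ∀ k, 0 < α k) (hper : ∀ k, α (k + 3) = α k) {k : ℤ}
    (hk : Has212 α k) : lambdaVal α k = Real.sqrt 85 / 3 := by
  obtain ⟨h0, h1, h2⟩ := hk
  have hper' : ∀ k, revSeq α (k + 3) = revSeq α k := fun k => by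
    rw [revSeq, revSeq, ← hper]
    ring_nf
  have hm1 : α (k - 1) = 2 := by
    rw [← hper]
    ring_nf at *
    exact h2
  have hm2 : α (k - 2) = 1 := by
    rw [← hper]
    ring_nf at *
    exact h1
  have hm3 : α (k - 3) = 2 := by
    rw [← hper]
    ring_nf at *
    exact h0
  rw [lambdaVal_eq hp, h0, leftTail,
    rightTail_of_period_122 hp hper h1 h2 (by rw [hper, h0]),
    rightTail_of_period_212 (α := revSeq α) (fun _ => hp _) hper' (revSeq_eq_of_eq (k - 1) hm1)
      (revSeq_eq_of_eq (k - 2) hm2) (revSeq_eq_of_eq (k - 3) hm3)]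
  push_cast
  ring

lemma lambdaVal_of_has212 {c : ℤ} (h : ∀ n : ℤ, Has212 α (c + 3 * n)) :
    (∀ k, 0 < α k) ∧ (∀ k, lambdaVal α k ≤ Real.sqrt 85 / 3) ∧
      lambdaVal α c = Real.sqrt 85 / 3 := by
  have hmod : ∀ k, ∃ n, k = c + 3 * n ∨ k = c + 3 * n + 1 ∨ k = c + 3 * n + 2 := fun k =>
    ⟨(k - c) / 3, by omega⟩
  have hd : ∀ k, α k = 1 ∨ α k = 2 := by
    intro k
    obtain ⟨n, rfl | rfl | rfl⟩ := hmod k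
    exacts [.inr (h n).1, .inl (h n).2.1, .inr (h n).2.2]
  have hp : ∀ k, 0 < α k := fun k => by have := hd k; omega
  have hper : ∀ k, α (k + 3) = α k := by
    intro k
    obtain ⟨n, hn⟩ := hmod k
    obtain ⟨h0, h1, h2⟩ := h n
    obtain ⟨h3, h4, h5⟩ := h (n + 1)
    rw [show c + 3 * (n + 1) = c + 3 * n + 3 by ring] at h3 h4 h5
    rcases hn with rfl | rfl | rfl
    · rw [h0, h3]
    · rw [h1, ← h4]
      ring_nf
    · rw [h2, ← h5]
      ring_nf
  have hper' : ∀ k, revSeq α (k + 3) = revSeq α k := fun k => by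
    rw [revSeq, revSeq, ← hper]
    ring_nf
  have hval : ∀ n, lambdaVal α (c + 3 * n) = Real.sqrt 85 / 3 := fun n =>
    lambdaVal_of_period_212 hp hper (h n)
  refine ⟨hp, fun k => ?_, by simpa using hval 0⟩
  obtain ⟨n, rfl | rfl | rfl⟩ := hmod k
  · exact (hval n).le
  · have h1 := (rightTail_mem hd (c + 3 * n + 1)).2
    have h2 := (leftTail_mem hd (c + 3 * n + 1)).2
    have h3 := sqrt_85_mem.1
    norm_num at h3
    rw [lambdaVal_eq hp, (h n).2.1]
    push_cast
    linarith
  · have := lambdaVal_of_period_212 (α := revSeq α) (fun _ => hp _) hper' (h n).rev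
    rw [lambdaVal_revSeq hp] at this
    ring_nf at *
    exact this.le

lemma rightTail_of_period_111222 (hp : ∀ k, 0 < α k) {k : ℤ}
    (h : ∀ n : ℕ, α (k + 1 + n) = if n % 6 < 3 then 1 else 2) : rightTail α k = tailOnes := by
  have e : rightTail α (k + 6) = rightTail α k := rightTail_congr fun n => by
    rw [h, show k + 6 + 1 + (n : ℤ) = k + 1 + (n + 6 : ℕ) by push_cast; ring, h,
      Nat.add_mod_right]
  have h1 : α (k + 1) = 1 := by simpa using h 0
  have h2 : α (k + 2) = 1 := by simpa [add_assoc] using h 1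
  have h3 : α (k + 3) = 1 := by simpa [add_assoc] using h 2
  have h4 : α (k + 4) = 2 := by simpa [add_assoc] using h 3
  have h5 : α (k + 5) = 2 := by simpa [add_assoc] using h 4
  have h6 : α (k + 6) = 2 := by simpa [add_assoc] using h 5
  have h0 := rightTail_pos hp k
  have h7 : rightTail α k = (29 + 12 * rightTail α k) / (46 + 19 * rightTail α k) := by
    conv_lhs => rw [rightTail_step hp (k + 1) h1, rightTail_step hp (k := k + 1) (k + 2) h2,
      rightTail_step hp (k := k + 2) (k + 3) h3, rightTail_step hp (k := k + 3) (k + 4) h4,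
      rightTail_step hp (k := k + 4) (k + 5) h5, rightTail_step hp (k := k + 5) (k + 6) h6, e]
    push_cast
    field_simp
    ring
  rw [eq_div_iff (by positivity)] at h7
  have h8 : 2 * Real.sqrt 210 = 19 * rightTail α k + 17 := by
    have h9 : Real.sqrt 210 = (19 * rightTail α k + 17) / 2 := by
      rw [Real.sqrt_eq_iff_mul_self_eq (by norm_num) (by positivity)]
      linarith
    linarith
  rw [tailOnes, h8]
  ring

/-- The sequence of period `111222`. -/
def bottomSeq (k : ℤ) : ℕ := if k % 6 < 3 then 1 else 2

lemma bottomSeq_admissible : Admissible bottomSeq where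
  digit k := by
    unfold bottomSeq
    split_ifs <;> simp
  avoid_121 k := by
    unfold bottomSeq
    split_ifs <;> omega
  avoid_22212 k := by
    unfold bottomSeq
    split_ifs <;> omega
  avoid_21222 k := by
    unfold bottomSeq
    split_ifs <;> omega

lemma bottom_mem_markovSpectrum : 4 * Real.sqrt 210 / 19 ∈ markovSpectrum := by
  have h := bottomSeq_admissible
  refine mem_markovSpectrum_of_isGreatest h.pos (fun k => h.lambdaVal_le ?_ ?_) ⟨5, ?_⟩
  · unfold bottomSeq
    split_ifs <;> omega
  · unfold bottomSeq
    split_ifs <;> omega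
  · have hr : rightTail bottomSeq 5 = tailOnes := rightTail_of_period_111222 h.pos fun n => by
      unfold bottomSeq
      split_ifs <;> omega
    have hl : leftTail bottomSeq 3 = tailOnes :=
      rightTail_of_period_111222 h.rev.pos fun n => by
        unfold revSeq bottomSeq
        split_ifs <;> omega
    have hP := tailOnes_mem.1
    norm_num at hP
    rw [lambdaVal_eq h.pos, hr, leftTail_step h.pos 4 (d := 2) rfl,
      leftTail_step h.pos (k := 4) 3 (d := 2) rfl, hl, gap_bottom_eq, ← tailOnes_eq,
      show bottomSeq 5 = 2 from rfl]
    have : 5 + 2 * tailOnes ≠ 0 := by linarith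
    have : 2 + tailOnes ≠ 0 := by linarith
    push_cast
    field_simp
    ring

/-- The sequence `...111222111 22122122 111222111...`. -/
def topSeq (k : ℤ) : ℕ :=
  if max k (-1 - k) = 1 ∨ 4 ≤ max k (-1 - k) ∧ (max k (-1 - k) - 4) % 6 < 3 then 1 else 2

lemma topSeq_admissible : Admissible topSeq where
  digit k := by
    unfold topSeq
    split_ifs <;> simp
  avoid_121 k := by
    unfold topSeq
    split_ifs <;> omega
  avoid_22212 k := by
    unfold topSeq
    split_ifs <;> omega
  avoid_21222 k := by
    unfold topSeq
    split_ifs <;> omega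

lemma leftTail_topSeq (k : ℤ) : leftTail topSeq k = rightTail topSeq (-1 - k) :=
  rightTail_congr fun n => by
    simp only [revSeq, topSeq]
    rw [max_comm]
    ring_nf

lemma lambdaVal_topSeq_symm (k : ℤ) : lambdaVal topSeq (-1 - k) = lambdaVal topSeq k := by
  have h : topSeq (-1 - k) = topSeq k := by
    simp only [topSeq]
    rw [max_comm]
    ring_nf
  rw [lambdaVal_eq topSeq_admissible.pos, lambdaVal_eq topSeq_admissible.pos, leftTail_topSeq,
    leftTail_topSeq, h, sub_sub_cancel]
  ring

lemma lambdaVal_topSeq_neg_three :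
    lambdaVal topSeq (-3) = (74613 + 4096 * Real.sqrt 210) / 43449 := by
  have h := topSeq_admissible
  have hr : rightTail topSeq 3 = tailOnes := rightTail_of_period_111222 h.pos fun n => by
    unfold topSeq
    split_ifs <;> omega
  have h2 := rightTail_step h.pos (k := 2) 3 (d := 2) rfl
  rw [lambdaVal_eq h.pos, leftTail_topSeq, show (-1 - -3 : ℤ) = 2 by norm_num,
    rightTail_step h.pos (k := -3) (-2) (d := 1) rfl,
    rightTail_step h.pos (k := -2) (-1) (d := 2) rfl,
    rightTail_step h.pos (k := -1) 0 (d := 2) rfl, rightTail_step h.pos (k := 0) 1 (d := 1) rfl,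
    rightTail_step h.pos (k := 1) 2 (d := 2) rfl, h2, hr, show topSeq (-3) = 2 from rfl,
    gap_top_eq, tailOnes_eq]
  have hM : 0 < tailMax := by
    have := tailMax_mem.1
    norm_num at this
    linarith
  push_cast
  field_simp
  ring

lemma lambdaVal_topSeq_zero_le :
    lambdaVal topSeq 0 ≤ (74613 + 4096 * Real.sqrt 210) / 43449 := by
  have h := topSeq_admissible
  have ht := lt_gap_top
  have hr := (rightTail_mem h.digit 4).2
  have hr0 := rightTail_pos h.pos 4
  have hl := (rightTail_mem h.digit 3).2
  have hl0 := rightTail_pos h.pos 3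
  have h3 := rightTail_step h.pos (k := 3) 4 (d := 1) rfl
  have e1 : rightTail topSeq 0 = (7 + 5 * rightTail topSeq 4) / (10 + 7 * rightTail topSeq 4) := by
    rw [rightTail_step h.pos (k := 0) 1 (d := 1) rfl, rightTail_step h.pos (k := 1) 2 (d := 2) rfl,
      rightTail_step h.pos (k := 2) 3 (d := 2) rfl, h3]
    push_cast
    field_simp
    ring
  have e2 : rightTail topSeq (-1) =
      (7 + 3 * rightTail topSeq 3) / (19 + 8 * rightTail topSeq 3) := by
    rw [rightTail_step h.pos (k := -1) 0 (d := 2) rfl, rightTail_step h.pos (k := 0) 1 (d := 1) rfl,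
      rightTail_step h.pos (k := 1) 2 (d := 2) rfl, rightTail_step h.pos (k := 2) 3 (d := 2) rfl]
    push_cast
    field_simp
    ring
  have b1 : rightTail topSeq 0 ≤ 0.705 := by
    rw [e1, div_le_iff₀ (by positivity)]
    norm_num
    linarith
  have b2 : rightTail topSeq (-1) ≤ 0.371 := by
    rw [e2, div_le_iff₀ (by positivity)]
    norm_num
    linarith
  rw [lambdaVal_eq h.pos, leftTail_topSeq, sub_zero, show topSeq 0 = 2 from rfl]
  norm_num at *
  linarith

lemma top_mem_markovSpectrum :
    (74613 + 4096 * Real.sqrt 210) / 43449 ∈ markovSpectrum := by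
  have h := topSeq_admissible
  refine mem_markovSpectrum_of_isGreatest h.pos (fun k => ?_) ⟨-3, lambdaVal_topSeq_neg_three⟩
  by_cases hk : k = -3 ∨ k = -1 ∨ k = 0 ∨ k = 2
  · rcases hk with rfl | rfl | rfl | rfl
    · exact lambdaVal_topSeq_neg_three.le
    · exact (lambdaVal_topSeq_symm 0).le.trans lambdaVal_topSeq_zero_le
    · exact lambdaVal_topSeq_zero_le
    · exact ((lambdaVal_topSeq_symm (-3)).trans lambdaVal_topSeq_neg_three).le
  · have hlt : 4 * Real.sqrt 210 / 19 ≤ (74613 + 4096 * Real.sqrt 210) / 43449 := by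
      have h1 := gap_bottom_lt
      have h2 := lt_gap_top
      norm_num at *
      linarith
    refine (h.lambdaVal_le ?_ ?_).trans hlt
    · unfold topSeq
      split_ifs <;> omega
    · unfold topSeq
      split_ifs <;> omega

end Realization

/-- The intersection of the Markov spectrum with the open interval consists of
exactly one (hence isolated) point, and both endpoints belong to the Markov
spectrum. -/
theorem markov_gap_6 :
    markovSpectrum ∩ Ioo (4 * Real.sqrt 210 / 19) ((74613 + 4096 * Real.sqrt 210) / 43449) = {(Real.sqrt 85 / 3 : ℝ)} ∧
    (4 * Real.sqrt 210 / 19) ∈ markovSpectrum ∧ ((74613 + 4096 * Real.sqrt 210) / 43449) ∈ markovSpectrum := by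
  refine ⟨Set.Subset.antisymm ?_ ?_, bottom_mem_markovSpectrum, top_mem_markovSpectrum⟩
  · rintro x ⟨⟨α, hp, hb, rfl⟩, hlow, hhigh⟩
    have hlt : ∀ k, lambdaVal α k < (74613 + 4096 * Real.sqrt 210) / 43449 := fun k =>
      (le_ciSup hb k).trans_lt hhigh
    have hadm := admissible_of_lambdaVal_lt hp fun k => (hlt k).trans gap_top_lt
    obtain ⟨k, hk⟩ := exists_lt_of_lt_ciSup hlow
    obtain ⟨c, hc⟩ := exists_has212_of_lt_lambdaVal hadm hk
    obtain ⟨-, hle, hval⟩ := lambdaVal_of_has212 (hadm.has212_add_three_mul hlt hc)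
    exact markovValue_eq_of_isGreatest hle ⟨c, hval⟩
  · rintro x rfl
    obtain ⟨hp, hle, hval⟩ := lambdaVal_of_has212
      (α := fun k => if k % 3 = 1 then 1 else 2) (c := 0) fun n => by
        simp only [Has212]
        split_ifs <;> omega
    have h1 := gap_bottom_lt
    have h2 := lt_gap_top
    have h3 := sqrt_85_mem
    refine ⟨mem_markovSpectrum_of_isGreatest hp hle ⟨0, hval⟩, ?_, ?_⟩ <;>
      norm_num at * <;> linarith
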